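/- Feasible solutions of the improved formulation recover the strategy's expected utility: let S* ⊆ S contain every path s with p(s) > 0. Fix a strategy Z with induced binary variables z, and suppose x : S* → ℝ satisfies 0 ≤ x(s) ≤ 1 for all s ∈ S*, ∑_{s ∈ S* ∩ S_{s_j|s_{I(j)}}} x(s) ≤ Γ(s_j|s_{I(j)}) · z(s_j | s_{I(j)}) for every j ∈ D, s_j ∈ S_j, s_{I(j)} ∈ S_{I(j)} (with Γ(s_j|s_{I(j)}) = min{ |S* ∩ S_{s_j|s_{I(j)}}|, ∏_{k ∈ C \ ({j} ∪ I(j))} |S_k| }), and ∑_{s∈S*} p(s)x(s) = 1. Then x(s) = 0 for every s ∈ S* that is not compatible with Z, x(s) = 1 for every s ∈ S* compatible with Z with p(s) > 0, and consequently ∑_{s∈S*} p(s)x(s)U(s) = ∑_{s∈S(Z)} p(s)U(s) for any utility function U : S → ℝ. -/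

import Mathlib

/-!
STATEMENT 11: Feasible solutions of the improved formulation recover the strategy's
expected utility: let S* ⊆ S contain every path s with p(s) > 0. Fix a strategy Z with
induced binary variables z, and suppose x : S* → ℝ satisfies 0 ≤ x(s) ≤ 1 for all
s ∈ S*, ∑_{s ∈ S* ∩ S_{s_j|s_{I(j)}}} x(s) ≤ Γ(s_j|s_{I(j)}) · z(s_j | s_{I(j)}) for
every j ∈ D, s_j ∈ S_j, s_{I(j)} ∈ S_{I(j)} (with
Γ(s_j|s_{I(j)}) = min{ |S* ∩ S_{s_j|s_{I(j)}}|, ∏_{k ∈ C \ ({j} ∪ I(j))} |S_k| }),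
and ∑_{s∈S*} p(s)x(s) = 1. Then x(s) = 0 for every s ∈ S* that is not compatible with
Z, x(s) = 1 for every s ∈ S* compatible with Z with p(s) > 0, and consequently
∑_{s∈S*} p(s)x(s)U(s) = ∑_{s∈S(Z)} p(s)U(s) for any utility function U : S → ℝ.
-/

open Finset

attribute [local instance] Classical.propDecidable

/-- Restriction of a path `s` to the information set `I j` of node `j`. -/
def restrict {n : ℕ} {S : Fin n → Type} (I : Fin n → Finset (Fin n))
    (s : ∀ j, S j) (j : Fin n) : ∀ i : (I j), S i.1 :=
  fun i => s i.1

/-- The path probability `p(s) = ∏_{j ∈ C} P(s_j | s_{I(j)})`. -/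
def pathProb {n : ℕ} {S : Fin n → Type} (C : Finset (Fin n))
    (I : Fin n → Finset (Fin n))
    (P : ∀ j : Fin n, (∀ i : (I j), S i.1) → S j → ℝ)
    (s : ∀ j, S j) : ℝ :=
  ∏ j ∈ C, P j (restrict I s j) (s j)

/-!
Replacing every decision node by the point mass at `Z` turns the diagram into one in which all
nodes carry conditional laws, so summing out the nodes in topological order shows that the paths
compatible with `Z` have total probability `1`. The linking constraint forces `x = 0` off the
compatible paths, so `1 = ∑ p x ≤ ∑ p = 1` with both sums over compatible paths. Equality of the
sums together with `p x ≤ p` gives `p x = p` on each compatible path.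
-/

section WeightedSelection

variable {ι R : Type*} [Semiring R] [PartialOrder R] [IsStrictOrderedRing R]
  {A T : Finset ι} {p x : ι → R}

theorem mul_eq_left_of_sum_mul_eq_sum (hp : ∀ i ∈ A, 0 ≤ p i)
    (hpT : ∀ i ∈ A, i ∉ T → p i = 0) (hx : ∀ i ∈ T, x i ≤ 1)
    (hxA : ∀ i ∈ T, i ∉ A → x i = 0) (hsum : ∑ i ∈ T, p i * x i = ∑ i ∈ A, p i) :
    ∀ i ∈ A, p i * x i = p i := by
  have hle : ∀ i ∈ A, p i * x i ≤ p i := fun i hi => by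
    by_cases hiT : i ∈ T
    · exact mul_le_of_le_one_right (hp i hi) (hx i hiT)
    · rw [hpT i hi hiT, zero_mul]
  refine (sum_eq_sum_iff_of_le hle).mp (Eq.trans ?_ hsum)
  exact sum_congr_of_eq_on_inter (fun i hi hiT => by rw [hpT i hi hiT, zero_mul])
    (fun i hi hiA => by rw [hxA i hi hiA, mul_zero]) fun _ _ _ => rfl

end WeightedSelection

-- Typing the history of `j` as `∀ i, i < j → S i` builds in that `q j` ignores later coordinates.
theorem sum_prod_history_eq_one {R : Type*} [CommSemiring R] {n : ℕ} {S : Fin n → Type*}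
    [∀ j, Fintype (S j)] (q : ∀ j, (∀ i, i < j → S i) → S j → R)
    (hq : ∀ j h, ∑ a, q j h a = 1) :
    ∑ s : ∀ j, S j, ∏ j, q j (fun i _ => s i) (s j) = 1 := by
  induction n with
  | zero => simp
  | succ n ih =>
    have first_history (s : ∀ j, S j) :
        (fun i (_ : i < 0) => s i) = fun i hi => absurd hi (Fin.not_lt_zero i) := by
      funext i hi
      exact absurd hi (Fin.not_lt_zero i)
    let prepend (a : S 0) (j : Fin n) (h : ∀ i, i < j → S i.succ) : ∀ i, i < j.succ → S i :=
      Fin.cases (fun _ => a) fun i hi => h i (Fin.succ_lt_succ_iff.mp hi)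
    have history_cons (a : S 0) (t : ∀ j : Fin n, S j.succ) (j : Fin n) :
        (fun i (_ : i < j.succ) => (Fin.cons a t : ∀ i, S i) i) =
          prepend a j fun i _ => t i := by
      funext i hi
      cases i using Fin.cases <;> rfl
    have sum_tail (a : S 0) :
        ∑ t : ∀ j : Fin n, S j.succ, ∏ j, q j.succ (prepend a j fun i _ => t i) (t j) = 1 :=
      ih (fun j h => q j.succ (prepend a j h)) fun j h => hq j.succ _
    rw [← (Fin.consEquiv S).sum_comp, Fintype.sum_prod_type]
    simp only [Fin.consEquiv_apply, Fin.prod_univ_succ, Fin.cons_zero, Fin.cons_succ,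
      first_history, history_cons, ← mul_sum, sum_tail, mul_one, hq]

section InfluenceDiagram

variable {n : ℕ} {S : Fin n → Type} {C D : Finset (Fin n)} {I : Fin n → Finset (Fin n)}
  {P : ∀ j : Fin n, (∀ i : (I j), S i.1) → S j → ℝ}
  {Z : ∀ j : Fin n, (∀ i : (I j), S i.1) → S j}

/-- A path is compatible with the strategy `Z` if it follows `Z` at every decision node in `D`.
Values of `Z` outside `D` are ignored. The notion is reducible so that its decidability instance
agrees with that of the unfolded condition. -/
abbrev IsCompatible (D : Finset (Fin n)) (I : Fin n → Finset (Fin n))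
    (Z : ∀ j : Fin n, (∀ i : (I j), S i.1) → S j) (s : ∀ j, S j) : Prop :=
  ∀ j ∈ D, Z j (restrict I s j) = s j

/-- The conditional law of each node once the strategy `Z` is played: the given law `P` at a
chance node, and the point mass at the prescribed state at any other node. -/
noncomputable def nodeLaw (C : Finset (Fin n)) (P : ∀ j : Fin n, (∀ i : (I j), S i.1) → S j → ℝ)
    (Z : ∀ j : Fin n, (∀ i : (I j), S i.1) → S j) (j : Fin n) (sI : ∀ i : (I j), S i.1)
    (sj : S j) : ℝ :=
  if j ∈ C then P j sI sj else if Z j sI = sj then 1 else 0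

theorem pathProb_nonneg (hP : ∀ j ∈ C, ∀ sI sj, 0 ≤ P j sI sj) (s : ∀ j, S j) :
    0 ≤ pathProb C I P s :=
  prod_nonneg fun j hj => hP j hj _ _

theorem sum_pathProb_univ [∀ j, Fintype (S j)] (hI : ∀ j, ∀ i ∈ I j, i < j)
    (hP : ∀ j sI, ∑ sj, P j sI sj = 1) : ∑ s, pathProb univ I P s = 1 :=
  sum_prod_history_eq_one (fun j h => P j fun i => h i (hI j i i.2)) fun j _ => hP j _

theorem sum_nodeLaw [∀ j, Fintype (S j)] (hP : ∀ j ∈ C, ∀ sI, ∑ sj, P j sI sj = 1)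
    (j : Fin n) (sI : ∀ i : (I j), S i.1) : ∑ sj, nodeLaw C P Z j sI sj = 1 := by
  by_cases hj : j ∈ C
  · simpa only [nodeLaw, if_pos hj] using hP j hj sI
  · simp only [nodeLaw, if_neg hj, sum_ite_eq, mem_univ, if_true]

theorem pathProb_univ_nodeLaw (hCD : IsCompl C D) (s : ∀ j, S j) :
    pathProb univ I (nodeLaw C P Z) s =
      if IsCompatible D I Z s then pathProb C I P s else 0 := by
  have chance : pathProb C I (nodeLaw C P Z) s = pathProb C I P s :=
    prod_congr rfl fun j hj => if_pos hj
  have decision : pathProb D I (nodeLaw C P Z) s = if IsCompatible D I Z s then 1 else 0 :=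
    calc pathProb D I (nodeLaw C P Z) s
        = ∏ j ∈ D, if Z j (restrict I s j) = s j then 1 else 0 :=
          prod_congr rfl fun j hj => if_neg (disjoint_right.mp hCD.disjoint hj)
      _ = if IsCompatible D I Z s then 1 else 0 := by simp only [prod_ite_zero, prod_const_one]
  calc pathProb univ I (nodeLaw C P Z) s
      = pathProb C I (nodeLaw C P Z) s * pathProb D I (nodeLaw C P Z) s :=
        (hCD.prod_mul_prod _).symm
    _ = if IsCompatible D I Z s then pathProb C I P s else 0 := by
        rw [chance, decision, mul_ite, mul_one, mul_zero]

theorem sum_pathProb_isCompatible [∀ j, Fintype (S j)] (hCD : IsCompl C D)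
    (hI : ∀ j, ∀ i ∈ I j, i < j) (hP : ∀ j ∈ C, ∀ sI, ∑ sj, P j sI sj = 1) :
    ∑ s with IsCompatible D I Z s, pathProb C I P s = 1 := by
  rw [sum_filter, ← sum_pathProb_univ hI (sum_nodeLaw (Z := Z) hP)]
  exact sum_congr rfl fun s _ => (pathProb_univ_nodeLaw hCD s).symm

theorem eq_zero_of_not_isCompatible {T : Finset (∀ j, S j)} {x : (∀ j, S j) → ℝ}
    {Γ : ∀ j, S j → (∀ i : (I j), S i.1) → ℝ} (hx : ∀ s ∈ T, 0 ≤ x s)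
    (hΓ : ∀ j ∈ D, ∀ sj sI, ∑ s ∈ T with s j = sj ∧ restrict I s j = sI, x s ≤
      Γ j sj sI * if Z j sI = sj then 1 else 0)
    {s : ∀ j, S j} (hs : s ∈ T) (hZ : ¬ IsCompatible D I Z s) : x s = 0 := by
  obtain ⟨j, hj, hne⟩ : ∃ j ∈ D, Z j (restrict I s j) ≠ s j := by
    simpa only [IsCompatible, not_forall, exists_prop] using hZ
  refine le_antisymm ?_ (hx s hs)
  calc x s
      ≤ ∑ t ∈ T with t j = s j ∧ restrict I t j = restrict I s j, x t :=
        single_le_sum (fun t ht => hx t (mem_filter.mp ht).1) (mem_filter.mpr ⟨hs, rfl, rfl⟩)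
    _ ≤ 0 := by simpa only [if_neg hne, mul_zero] using hΓ j hj (s j) (restrict I s j)

end InfluenceDiagram

theorem feasible_solution_recovers_expected_utility_general {n : ℕ}
    (S : Fin n → Type) [∀ j, Fintype (S j)] {E : Type*} [AddCommMonoid E] [Module ℝ E]
    (C D : Finset (Fin n)) (hCD : IsCompl C D)
    (I : Fin n → Finset (Fin n)) (hI : ∀ j, ∀ i ∈ I j, i < j)
    (P : ∀ j : Fin n, (∀ i : (I j), S i.1) → S j → ℝ)
    (hPnonneg : ∀ j ∈ C, ∀ sI sj, 0 ≤ P j sI sj)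
    (hPsum : ∀ j ∈ C, ∀ sI, ∑ sj, P j sI sj = 1)
    (Sstar : Finset (∀ j, S j))
    (hSstar : ∀ s, 0 < pathProb C I P s → s ∈ Sstar)
    (Z : ∀ j : Fin n, (∀ i : (I j), S i.1) → S j)
    (U : (∀ j, S j) → E)
    (x : (∀ j, S j) → ℝ)
    (hxbounds : ∀ s ∈ Sstar, 0 ≤ x s ∧ x s ≤ 1)
    (Γ : ∀ j, S j → (∀ i : (I j), S i.1) → ℝ)
    (hxΓ : ∀ j ∈ D, ∀ sj sI, ∑ s ∈ Sstar with s j = sj ∧ restrict I s j = sI, x s ≤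
      Γ j sj sI * if Z j sI = sj then 1 else 0)
    (hxsum : ∑ s ∈ Sstar, pathProb C I P s * x s = 1) :
    (∀ s ∈ Sstar, ¬ IsCompatible D I Z s → x s = 0) ∧
    (∀ s ∈ Sstar, IsCompatible D I Z s → 0 < pathProb C I P s → x s = 1) ∧
    ∑ s ∈ Sstar, (pathProb C I P s * x s) • U s =
      ∑ s with IsCompatible D I Z s, pathProb C I P s • U s := by
  have hp := pathProb_nonneg hPnonneg
  have hp_zero : ∀ s, s ∉ Sstar → pathProb C I P s = 0 := fun s hs =>
    ((hp s).eq_of_not_lt (mt (hSstar s) hs)).symm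
  have hx_zero : ∀ s ∈ Sstar, ¬ IsCompatible D I Z s → x s = 0 := fun s hs =>
    eq_zero_of_not_isCompatible (fun t ht => (hxbounds t ht).1) hxΓ hs
  have hx_zero_of_notMem : ∀ s ∈ Sstar, s ∉ univ.filter (IsCompatible D I Z) → x s = 0 := by
    simpa only [mem_filter_univ] using hx_zero
  have hpx : ∀ s ∈ univ.filter (IsCompatible D I Z),
      pathProb C I P s * x s = pathProb C I P s :=
    mul_eq_left_of_sum_mul_eq_sum (fun s _ => hp s) (fun s _ => hp_zero s)
      (fun s hs => (hxbounds s hs).2) hx_zero_of_notMem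
      (hxsum.trans (sum_pathProb_isCompatible hCD hI hPsum).symm)
  refine ⟨hx_zero,
    fun s _ hZ hpos => (mul_eq_left₀ hpos.ne').mp (hpx s ((mem_filter_univ s).mpr hZ)),
    sum_congr_of_eq_on_inter (fun s hs hZ => ?_) (fun s _ hs => ?_) fun s _ hZ => ?_⟩
  · rw [hx_zero_of_notMem s hs hZ, mul_zero, zero_smul]
  · rw [hp_zero s hs, zero_smul]
  · rw [hpx s hZ]

theorem feasible_solution_recovers_expected_utility {n : ℕ}
    (S : Fin n → Type) [∀ j, Fintype (S j)] [∀ j, Nonempty (S j)]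
    (C D : Finset (Fin n)) (hCD : Disjoint C D) (hCDunion : C ∪ D = Finset.univ)
    (I : Fin n → Finset (Fin n)) (hI : ∀ j, ∀ i ∈ I j, i < j)
    (P : ∀ j : Fin n, (∀ i : (I j), S i.1) → S j → ℝ)
    (hPnonneg : ∀ j ∈ C, ∀ (sI : ∀ i : (I j), S i.1) (sj : S j), 0 ≤ P j sI sj)
    (hPsum : ∀ j ∈ C, ∀ sI : ∀ i : (I j), S i.1, ∑ sj : S j, P j sI sj = 1)
    (Sstar : Finset (∀ j, S j))
    (hSstar : ∀ s : ∀ j, S j, 0 < pathProb C I P s → s ∈ Sstar)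
    (Z : ∀ j : Fin n, (∀ i : (I j), S i.1) → S j)
    (U : (∀ j, S j) → ℝ)
    (x : (∀ j, S j) → ℝ)
    (hxbounds : ∀ s ∈ Sstar, 0 ≤ x s ∧ x s ≤ 1)
    (hxgamma : ∀ j ∈ D, ∀ (sj : S j) (sI : ∀ i : (I j), S i.1),
      (∑ s ∈ Sstar.filter
          (fun s : ∀ k, S k => s j = sj ∧ restrict I s j = sI), x s)
        ≤ ((min
              (Sstar.filter
                (fun s : ∀ k, S k => s j = sj ∧ restrict I s j = sI)).card
              (∏ k ∈ C \ insert j (I j), Fintype.card (S k)) : ℕ) : ℝ)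
          * (if Z j sI = sj then (1 : ℝ) else 0))
    (hxsum : ∑ s ∈ Sstar, pathProb C I P s * x s = 1) :
    (∀ s ∈ Sstar, ¬ (∀ j ∈ D, Z j (restrict I s j) = s j) → x s = 0) ∧
    (∀ s ∈ Sstar, (∀ j ∈ D, Z j (restrict I s j) = s j) →
        0 < pathProb C I P s → x s = 1) ∧
    (∑ s ∈ Sstar, pathProb C I P s * x s * U s)
      = ∑ s ∈ Finset.univ.filter
          (fun s : ∀ j, S j => ∀ j ∈ D, Z j (restrict I s j) = s j),
        pathProb C I P s * U s :=
  feasible_solution_recovers_expected_utility_general S C D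
    ⟨hCD, codisjoint_iff.mpr hCDunion⟩ I hI P hPnonneg hPsum Sstar hSstar Z U x hxbounds _ hxgamma
    hxsum
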